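/- arXiv:1410.8229 — 5 statements merged into one kernel-verified Lean document; each statement's English description precedes it below -/
import Mathlib

section
/- Let m, n, k be positive integers, let A ∈ ℝ^{m×n}, and let μ ∈ (0,1). Suppose there exist constants D₁ and D₂ such that for every ε ≥ 0, every x ∈ ℝⁿ, and every η ∈ ℝᵐ with ‖η‖₂ ≤ ε, every minimizer x̂ of the function z ↦ μ‖z‖₁ + (1−μ)‖z‖₂² over the set {z ∈ ℝⁿ : ‖(Ax+η) − Az‖₂ ≤ ε} satisfies ‖x̂ − x‖₂ ≤ D₁·σ_k(x, ‖·‖₁) + D₂·ε. Then m ≥ n/4. -/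
/-- The ℓ¹-norm of a vector in ℝⁿ. -/
noncomputable def l1 {n : ℕ} (x : Fin n → ℝ) : ℝ := ∑ i, |x i|

/-- The ℓ²-norm of a vector in ℝⁿ. -/
noncomputable def l2 {n : ℕ} (x : Fin n → ℝ) : ℝ := Real.sqrt (∑ i, (x i) ^ 2)

/-- The ℓᵖ-norm of a vector in ℝⁿ. -/
noncomputable def lpNorm {n : ℕ} (p : ℝ) (x : Fin n → ℝ) : ℝ := (∑ i, |x i| ^ p) ^ (1 / p)

/-- A vector is `k`-sparse if it has at most `k` nonzero components. -/
def IsSparse {n : ℕ} (k : ℕ) (x : Fin n → ℝ) : Prop :=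
  (Finset.univ.filter (fun i => x i ≠ 0)).card ≤ k

/-- The `k`-sparsity index of `x` with respect to the ℓ¹-norm. -/
noncomputable def sigma1 {n : ℕ} (k : ℕ) (x : Fin n → ℝ) : ℝ :=
  sInf ((fun z => l1 (x - z)) '' {z | IsSparse k z})

/-- The `k`-sparsity index of `x` with respect to the ℓ²-norm. -/
noncomputable def sigma2 {n : ℕ} (k : ℕ) (x : Fin n → ℝ) : ℝ :=
  sInf ((fun z => l2 (x - z)) '' {z | IsSparse k z})

/-- The vector agreeing with `x` on `S` and zero elsewhere. -/
def proj {n : ℕ} (S : Finset (Fin n)) (x : Fin n → ℝ) : Fin n → ℝ :=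
  fun i => if i ∈ S then x i else 0

/-- `G` is a partition of `{1,…,n}` into `g` disjoint nonempty subsets. -/
def IsPartition {n g : ℕ} (G : Fin g → Finset (Fin n)) : Prop :=
  (∀ i, (G i).Nonempty) ∧ (∀ i j, i ≠ j → Disjoint (G i) (G j)) ∧
    (∀ x : Fin n, ∃ i, x ∈ G i)

/-- The Sparse Group LASSO norm associated to the partition `G` with parameter `μ`. -/
noncomputable def sglNorm {n g : ℕ} (G : Fin g → Finset (Fin n)) (μ : ℝ) (z : Fin n → ℝ) : ℝ :=
  ∑ i, ((1 - μ) * l1 (proj (G i) z) + μ * l2 (proj (G i) z))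

/-- `A` satisfies the Restricted Isometry Property of order `k` with constant `δ`. -/
def RIP {m n : ℕ} (A : Matrix (Fin m) (Fin n) ℝ) (k : ℕ) (δ : ℝ) : Prop :=
  ∀ u : Fin n → ℝ, IsSparse k u →
    (1 - δ) * (l2 u) ^ 2 ≤ (l2 (A.mulVec u)) ^ 2 ∧
      (l2 (A.mulVec u)) ^ 2 ≤ (1 + δ) * (l2 u) ^ 2

/-- `A` satisfies the ℓ₂ robust null space property of order `k` with constants `ρ`, `τ`. -/
def RNSP {m n : ℕ} (A : Matrix (Fin m) (Fin n) ℝ) (k : ℕ) (ρ τ : ℝ) : Prop :=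
  ∀ h : Fin n → ℝ, ∀ S : Finset (Fin n), S.card ≤ k →
    l2 (proj S h) ≤ (ρ / Real.sqrt k) * l1 (proj Sᶜ h) +
      (τ / Real.sqrt k) * l2 (A.mulVec h)

lemma l2_nonpos_imp {n : ℕ} {x : Fin n → ℝ} (h : l2 x ≤ 0) : x = 0 := by
  unfold l2 at h
  have h1 : ∑ i, (x i) ^ 2 ≤ 0 := Real.sqrt_eq_zero'.mp (le_antisymm h (Real.sqrt_nonneg _))
  have h2 : ∑ i, (x i) ^ 2 = 0 := le_antisymm h1 (Finset.sum_nonneg fun i _ => sq_nonneg _)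
  rw [Finset.sum_eq_zero_iff_of_nonneg (fun i _ => sq_nonneg _)] at h2
  funext i
  simpa using h2 i (Finset.mem_univ i)

lemma l2_zero_eq {n : ℕ} : l2 (0 : Fin n → ℝ) = 0 := by simp [l2]

lemma l2_sq {n : ℕ} (x : Fin n → ℝ) : (l2 x) ^ 2 = ∑ i, (x i) ^ 2 :=
  Real.sq_sqrt (Finset.sum_nonneg fun i _ => sq_nonneg _)

lemma norm_le_l1 {n : ℕ} (x : Fin n → ℝ) : ‖x‖ ≤ l1 x := by
  refine (pi_norm_le_iff_of_nonneg (Finset.sum_nonneg fun i _ => abs_nonneg _)).2 fun i => ?_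
  exact Finset.single_le_sum (f := fun i => |x i|) (fun i _ => abs_nonneg _) (Finset.mem_univ i)

lemma sigma1_sparse {n k : ℕ} {x : Fin n → ℝ} (hx : IsSparse k x) : sigma1 k x = 0 := by
  have hz : (0 : ℝ) ∈ ((fun z => l1 (x - z)) '' {z | IsSparse k z}) := ⟨x, hx, by simp [l1]⟩
  have hb : ∀ y ∈ ((fun z => l1 (x - z)) '' {z | IsSparse k z}), (0 : ℝ) ≤ y := by
    rintro _ ⟨z, _, rfl⟩
    exact Finset.sum_nonneg fun i _ => abs_nonneg _
  exact le_antisymm (csInf_le ⟨0, hb⟩ hz) (le_csInf ⟨0, hz⟩ hb)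

lemma exists_min_en {m n : ℕ} (A : Matrix (Fin m) (Fin n) ℝ) (μ : ℝ) (h0 : 0 < μ) (h1 : μ < 1)
    (x : Fin n → ℝ) : ∃ y : Fin n → ℝ, A.mulVec y = A.mulVec x ∧
      ∀ z : Fin n → ℝ, A.mulVec z = A.mulVec x →
        μ * l1 y + (1 - μ) * (l2 y) ^ 2 ≤ μ * l1 z + (1 - μ) * (l2 z) ^ 2 := by
  set f : (Fin n → ℝ) → ℝ := fun z => μ * l1 z + (1 - μ) * (l2 z) ^ 2 with hf
  have hlow : ∀ z, μ * ‖z‖ ≤ f z := fun z => by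
    have a := mul_le_mul_of_nonneg_left (norm_le_l1 z) h0.le
    have b : 0 ≤ (1 - μ) * (l2 z) ^ 2 := mul_nonneg (by linarith) (sq_nonneg _)
    simp only [hf]; linarith
  have hc : Continuous f := by
    simp only [hf, l2_sq, l1]; fun_prop
  have hcl : IsClosed {z : Fin n → ℝ | A.mulVec z = A.mulVec x} :=
    isClosed_eq (by fun_prop) continuous_const
  have hxm : x ∈ Metric.closedBall (0 : Fin n → ℝ) (f x / μ) ∩ {z | A.mulVec z = A.mulVec x} := by
    refine ⟨?_, rfl⟩
    rw [mem_closedBall_zero_iff, le_div_iff₀ h0]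
    linarith [hlow x]
  obtain ⟨y, hy, hmin⟩ := ((isCompact_closedBall _ _).inter_right hcl).exists_isMinOn
    ⟨x, hxm⟩ hc.continuousOn
  refine ⟨y, hy.2, fun z hz => ?_⟩
  by_cases hzb : z ∈ Metric.closedBall (0 : Fin n → ℝ) (f x / μ)
  · exact hmin ⟨hzb, hz⟩
  · rw [mem_closedBall_zero_iff, not_le, div_lt_iff₀ h0] at hzb
    have := hmin hxm
    have h3 : f y ≤ f x := this
    have h4 := hlow z
    change f y ≤ f z
    linarith

/-- If the Elastic Net decoder achieves robust sparse recovery of order `k`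
for the matrix `A`, then `m ≥ n/4`. -/
theorem stmt0 (m n k : ℕ) (hm : 0 < m) (hn : 0 < n) (hk : 0 < k)
    (A : Matrix (Fin m) (Fin n) ℝ) (μ : ℝ) (hμ : μ ∈ Set.Ioo (0 : ℝ) 1)
    (hrec : ∃ D₁ D₂ : ℝ, ∀ ε : ℝ, 0 ≤ ε → ∀ x : Fin n → ℝ, ∀ η : Fin m → ℝ,
      l2 η ≤ ε → ∀ xh : Fin n → ℝ,
        (l2 (A.mulVec x + η - A.mulVec xh) ≤ ε ∧
          ∀ z : Fin n → ℝ, l2 (A.mulVec x + η - A.mulVec z) ≤ ε →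
            μ * l1 xh + (1 - μ) * (l2 xh) ^ 2 ≤ μ * l1 z + (1 - μ) * (l2 z) ^ 2) →
        l2 (xh - x) ≤ D₁ * sigma1 k x + D₂ * ε) :
    (n : ℝ) / 4 ≤ (m : ℝ) := by 
  obtain ⟨h0, h1⟩ := hμ
  obtain ⟨D₁, D₂, H⟩ := hrec
  have key : ∀ x : Fin n → ℝ, IsSparse k x → ∀ z : Fin n → ℝ, A.mulVec z = A.mulVec x →
      μ * l1 x + (1 - μ) * (l2 x) ^ 2 ≤ μ * l1 z + (1 - μ) * (l2 z) ^ 2 := by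
    intro x hx
    obtain ⟨y, hy, hmin⟩ := exists_min_en A μ h0 h1 x
    have h2 := H 0 le_rfl x 0 l2_zero_eq.le y ⟨by simp [hy, l2_zero_eq], fun z hz => by
      refine hmin z ?_
      have := l2_nonpos_imp hz
      rw [add_zero, sub_eq_zero] at this
      exact this.symm⟩
    rw [sigma1_sparse hx, mul_zero, mul_zero, add_zero] at h2
    have h3 := sub_eq_zero.1 (l2_nonpos_imp h2)
    rw [← h3]
    intro z hz
    exact hmin z (by rw [hz, h3])
  have hmn : n ≤ m := by
    by_contra hlt
    have hker := LinearMap.ker_ne_bot_of_finrank_lt (f := Matrix.mulVecLin A) (by simpa using hlt)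
    obtain ⟨h, hh, hne⟩ := (Submodule.ne_bot_iff _).1 hker
    have hAh : A.mulVec h = 0 := by simpa using hh
    obtain ⟨i, hi⟩ := Function.ne_iff.1 hne
    have hi2 : 0 < (h i) ^ 2 := by
      have : h i ≠ 0 := hi
      positivity
    set B := μ * l1 h + (1 - μ) * (∑ j, (h j) ^ 2) with hB
    have hq : 0 < (1 - μ) * (h i) ^ 2 := mul_pos (by linarith) hi2
    obtain ⟨c, hc⟩ := exists_gt (B / ((1 - μ) * (h i) ^ 2))
    rw [div_lt_iff₀ hq] at hc
    have hBn : 0 ≤ B := by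
      have a : 0 ≤ l1 h := Finset.sum_nonneg fun i _ => abs_nonneg _
      have b : 0 ≤ ∑ j, (h j) ^ 2 := Finset.sum_nonneg fun i _ => sq_nonneg _
      have d : 0 ≤ 1 - μ := by linarith
      positivity
    set x : Fin n → ℝ := Pi.single i (-(c * h i)) with hx
    have hsp : IsSparse k x := by
      unfold IsSparse
      refine le_trans (Finset.card_le_card (t := {i}) ?_) (by rw [Finset.card_singleton]; exact hk)
      intro j hj
      by_contra hji
      simp at hji
      simp [hx, hji] at hj
    have h5 := key x hsp (x + h) (by rw [Matrix.mulVec_add, hAh, add_zero])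
    have h6 : l1 (x + h) ≤ l1 x + l1 h := by
      unfold l1
      rw [← Finset.sum_add_distrib]
      exact Finset.sum_le_sum fun j _ => abs_add_le _ _
    have h7 : ∑ j, ((x + h) j) ^ 2 = ∑ j, (x j) ^ 2 + ∑ j, (h j) ^ 2 - 2 * c * (h i) ^ 2 := by
      have e : ∑ j, x j * h j = -(c * h i) * h i := by
        simp [hx, Pi.single_apply]
      have : ∑ j, ((x + h) j) ^ 2
          = ∑ j, (x j) ^ 2 + ∑ j, (h j) ^ 2 + 2 * ∑ j, x j * h j := by
        rw [Finset.mul_sum, ← Finset.sum_add_distrib, ← Finset.sum_add_distrib]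
        refine Finset.sum_congr rfl fun j _ => ?_
        simp only [Pi.add_apply]; ring
      rw [this, e]; ring
    rw [l2_sq, l2_sq, h7] at h5
    have h8 := mul_le_mul_of_nonneg_left h6 h0.le
    nlinarith
  have : (n : ℝ) ≤ m := by exact_mod_cast hmn
  have hn0 : (0 : ℝ) ≤ n := Nat.cast_nonneg n
  linarith
end

section
/- Let m, n, k be positive integers, A ∈ ℝ^{m×n}, and μ ∈ (0,1). Suppose that for every k-sparse x ∈ ℝⁿ and every z ∈ ℝⁿ with Az = Ax, one has μ‖x‖₁ + (1−μ)‖x‖₂² ≤ μ‖z‖₁ + (1−μ)‖z‖₂². Then every h in the null space of A satisfies ‖h‖₂ ≤ 2·σ_k(h, ‖·‖₂). -/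
/-- If every `k`-sparse vector minimizes the Elastic Net regularizer over its
own fiber of `A`, then every `h` in the null space of `A` satisfies `‖h‖₂ ≤ 2·σ_k(h,‖·‖₂)`. -/
theorem stmt2 (m n k : ℕ) (hm : 0 < m) (hn : 0 < n) (hk : 0 < k)
    (A : Matrix (Fin m) (Fin n) ℝ) (μ : ℝ) (hμ : μ ∈ Set.Ioo (0 : ℝ) 1)
    (hmin : ∀ x : Fin n → ℝ, IsSparse k x → ∀ z : Fin n → ℝ, A.mulVec z = A.mulVec x →
      μ * l1 x + (1 - μ) * (l2 x) ^ 2 ≤ μ * l1 z + (1 - μ) * (l2 z) ^ 2) :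
    ∀ h : Fin n → ℝ, A.mulVec h = 0 → l2 h ≤ 2 * sigma2 k h := by
  intro h hh
  have hzero : ∀ i, h i = 0 := by
    intro i
    by_contra hi
    have h1 : (0 : ℝ) < 1 - μ := by linarith [hμ.2]
    have key : ∀ t : ℝ, 2 * (1 - μ) * (t * h i) ≤ μ * l1 h + (1 - μ) * (l2 h) ^ 2 := by
      intro t
      have hsp : IsSparse k (Pi.single i t : Fin n → ℝ) := by
        unfold IsSparse
        refine le_trans (Finset.card_le_card (t := {i}) ?_) (by rw [Finset.card_singleton]; exact hk)
        intro j hj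
        by_contra hji
        simp only [Finset.mem_singleton] at hji
        simp [hji] at hj
      have H := hmin _ hsp (Pi.single i t - h) (by rw [Matrix.mulVec_sub, hh, sub_zero])
      have e2 : ∀ x : Fin n → ℝ, (l2 x) ^ 2 = ∑ j, (x j) ^ 2 := fun x =>
        Real.sq_sqrt (Finset.sum_nonneg fun j _ => sq_nonneg _)
      have a1 : l1 (Pi.single i t - h) ≤ l1 (Pi.single i t : Fin n → ℝ) + l1 h := by
        unfold l1
        rw [← Finset.sum_add_distrib]
        exact Finset.sum_le_sum fun j _ => abs_sub _ _
      have a2 : (l2 (Pi.single i t - h)) ^ 2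
          = (l2 (Pi.single i t : Fin n → ℝ)) ^ 2 - 2 * (t * h i) + (l2 h) ^ 2 := by
        have a3 : t * h i = ∑ j, (Pi.single i t : Fin n → ℝ) j * h j := by
          simp [Pi.single_apply]
        rw [e2, e2, e2, a3, Finset.mul_sum, ← Finset.sum_sub_distrib, ← Finset.sum_add_distrib]
        refine Finset.sum_congr rfl fun j _ => ?_
        rw [Pi.sub_apply]
        ring
      rw [a2] at H
      have := mul_le_mul_of_nonneg_left a1 hμ.1.le
      nlinarith
    have K := key ((μ * l1 h + (1 - μ) * (l2 h) ^ 2 + 1) / (2 * (1 - μ)) / h i)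
    rw [div_mul_cancel₀ _ hi, mul_div_cancel₀ _ (by positivity)] at K
    linarith
  have h0 : l2 h = 0 := by simp [l2, hzero]
  rw [h0]
  have : 0 ≤ sigma2 k h := by
    apply Real.sInf_nonneg
    rintro _ ⟨z, _, rfl⟩
    exact Real.sqrt_nonneg _
  linarith
end

section
/- Let y ∈ ℝᵐ and A ∈ ℝ^{m×n}, where each column a_j of A satisfies ‖a_j‖₂ = 1. Let μ ∈ (0,1], let 𝒢 = {G₁,…,G_g} be a partition of {1,…,n} into g disjoint nonempty subsets, and let λ > 0. Let x̂ be a minimizer over z ∈ ℝⁿ of λ‖y − Az‖₂² + ‖z‖_{SGL,μ}. Suppose indices i and j belong to the same group G_s and that x̂_i·x̂_j > 0. Then |x̂_i − x̂_j| ≤ (2λ/μ)·√(2(1 − a_iᵀa_j))·‖y‖₂·‖x̂_{G_s}‖₂, where x̂_{G_s} denotes the restriction of x̂ to the coordinates in G_s. -/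
theorem aux_quad (b k δ : ℝ) (hk : 0 ≤ k) (hδ : 0 < δ)
    (h : ∀ t : ℝ, |t| ≤ δ → 0 ≤ b * t + k * t ^ 2) : b = 0 := by
  by_contra hb
  have hb' : 0 < |b| := abs_pos.mpr hb
  set ε := min (δ / |b|) (1 / (k + 1)) with hε
  have h1 : 0 < ε := by rw [hε]; positivity
  have h2 : ε * |b| ≤ δ := by
    rw [← le_div_iff₀ hb']; exact min_le_left _ _
  have h3 : ε * (k + 1) ≤ 1 := by
    rw [← le_div_iff₀ (by positivity)]; exact min_le_right _ _
  have h4 := h (-(b * ε)) (by rw [abs_neg, abs_mul, abs_of_pos h1]; linarith)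
  have h5 : 0 < b ^ 2 * ε := by positivity
  have h6 : b * -(b * ε) + k * (-(b * ε)) ^ 2 = (b ^ 2 * ε) * (ε * (k + 1) - 1 - ε) := by ring
  rw [h6] at h4
  nlinarith

theorem aux_sq {n : ℕ} (x : Fin n → ℝ) : l2 x ^ 2 = ∑ i, x i ^ 2 :=
  Real.sq_sqrt (Finset.sum_nonneg fun _ _ => sq_nonneg _)

theorem aux_nonneg {n : ℕ} (x : Fin n → ℝ) : 0 ≤ l2 x := Real.sqrt_nonneg _

/-- Perturbation direction. -/
noncomputable def pert {n : ℕ} (x : Fin n → ℝ) (i j : Fin n) (t : ℝ) : Fin n → ℝ :=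
  fun k => x k + ((if k = i then t else 0) + (if k = j then -t else 0))

theorem aux_mulVec {m n : ℕ} (A : Matrix (Fin m) (Fin n) ℝ) (x : Fin n → ℝ) (i j : Fin n) (t : ℝ)
    (r : Fin m) : A.mulVec (pert x i j t) r = A.mulVec x r + t * (A r i - A r j) := by
  simp only [Matrix.mulVec, dotProduct, pert, mul_add, Finset.sum_add_distrib, mul_ite, mul_zero,
    Finset.sum_ite_eq', Finset.mem_univ, if_true]
  simp
  ring

theorem aux_l1 {n : ℕ} (x : Fin n → ℝ) (i j : Fin n) (hij : i ≠ j) (S : Finset (Fin n))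
    (hi : i ∈ S) (hj : j ∈ S) (t : ℝ) (h : |x i + t| + |x j - t| = |x i| + |x j|) :
    l1 (proj S (pert x i j t)) = l1 (proj S x) := by
  have : ∀ k, |proj S (pert x i j t) k| = |proj S x k| +
      ((if k = i then |x i + t| - |x i| else 0) + (if k = j then |x j - t| - |x j| else 0)) := by
    intro k
    by_cases h1 : k = i
    · subst h1; simp [proj, pert, hi, hij]
    · by_cases h2 : k = j
      · subst h2; simp [proj, pert, hj, h1, sub_eq_add_neg]
      · simp [proj, pert, h1, h2]
  simp only [l1, this, Finset.sum_add_distrib, Finset.sum_ite_eq', Finset.mem_univ, if_true]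
  linarith

theorem aux_l2 {n : ℕ} (x : Fin n → ℝ) (i j : Fin n) (hij : i ≠ j) (S : Finset (Fin n))
    (hi : i ∈ S) (hj : j ∈ S) (t : ℝ) :
    l2 (proj S (pert x i j t)) ^ 2 = l2 (proj S x) ^ 2 + 2 * t * (x i - x j) + 2 * t ^ 2 := by
  have : ∀ k, (proj S (pert x i j t) k) ^ 2 = (proj S x k) ^ 2 +
      ((if k = i then 2 * t * x i + t ^ 2 else 0) +
        (if k = j then - 2 * t * x j + t ^ 2 else 0)) := by
    intro k
    by_cases h1 : k = i
    · subst h1; simp [proj, pert, hi, hij]; ring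
    · by_cases h2 : k = j
      · subst h2; simp [proj, pert, hj, h1]; ring
      · simp [proj, pert, h1, h2]
  simp only [aux_sq, this, Finset.sum_add_distrib, Finset.sum_ite_eq', Finset.mem_univ, if_true]
  ring

theorem aux_abs (a b t : ℝ) (hab : 0 < a * b) (ha : |t| ≤ |a|) (hb : |t| ≤ |b|) :
    |a + t| + |b - t| = |a| + |b| := by
  rcases pos_and_pos_or_neg_and_neg_of_mul_pos hab with ⟨h1, h2⟩ | ⟨h1, h2⟩
  · rw [abs_of_pos h1] at *
    rw [abs_of_pos h2] at *
    rw [abs_le] at ha hb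
    rw [abs_of_nonneg (by linarith), abs_of_nonneg (by linarith)]; ring
  · rw [abs_of_neg h1] at *
    rw [abs_of_neg h2] at *
    rw [abs_le] at ha hb
    rw [abs_of_nonpos (by linarith), abs_of_nonpos (by linarith)]; ring

theorem aux_other {n : ℕ} (x : Fin n → ℝ) (i j : Fin n) (S : Finset (Fin n))
    (hi : i ∉ S) (hj : j ∉ S) (t : ℝ) : proj S (pert x i j t) = proj S x := by
  funext k
  by_cases hk : k ∈ S
  · have h1 : k ≠ i := fun h => hi (h ▸ hk)
    have h2 : k ≠ j := fun h => hj (h ▸ hk)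
    simp [proj, pert, h1, h2]
  · simp [proj, hk]

/-- Grouping effect for the Sparse Group LASSO. -/
theorem stmt3 (m n g : ℕ) (y : Fin m → ℝ) (A : Matrix (Fin m) (Fin n) ℝ)
    (hcols : ∀ j : Fin n, l2 (fun i => A i j) = 1)
    (μ : ℝ) (hμ : μ ∈ Set.Ioc (0 : ℝ) 1)
    (G : Fin g → Finset (Fin n)) (hG : IsPartition G)
    (lam : ℝ) (hlam : 0 < lam)
    (xh : Fin n → ℝ)
    (hmin : ∀ z : Fin n → ℝ,
      lam * (l2 (y - A.mulVec xh)) ^ 2 + sglNorm G μ xh ≤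
        lam * (l2 (y - A.mulVec z)) ^ 2 + sglNorm G μ z)
    (i j : Fin n) (s : Fin g) (hi : i ∈ G s) (hj : j ∈ G s)
    (hprod : 0 < xh i * xh j) :
    |xh i - xh j| ≤ (2 * lam / μ) * Real.sqrt (2 * (1 - ∑ r, A r i * A r j)) *
      l2 y * l2 (proj (G s) xh) := by
  obtain ⟨hμ0, hμ1⟩ := hμ
  have hRn : 0 ≤ (2 * lam / μ) * Real.sqrt (2 * (1 - ∑ r, A r i * A r j)) *
      l2 y * l2 (proj (G s) xh) := by
    have := aux_nonneg y
    have := aux_nonneg (proj (G s) xh)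
    positivity
  by_cases hij : i = j
  · subst hij; simpa using hRn
  have hxi : xh i ≠ 0 := left_ne_zero_of_mul hprod.ne'
  have hxj : xh j ≠ 0 := right_ne_zero_of_mul hprod.ne'
  set N := l2 (proj (G s) xh) with hN
  have hNpos : 0 < N := by
    refine Real.sqrt_pos.mpr (Finset.sum_pos' (fun _ _ => sq_nonneg _) ⟨i, Finset.mem_univ _, ?_⟩)
    simp only [proj, hi, if_true]
    positivity
  set R := y - A.mulVec xh with hR
  set c := ∑ r, R r * (A r i - A r j) with hc
  set q := ∑ r, (A r i - A r j) ^ 2 with hq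
  have hq0 : 0 ≤ q := Finset.sum_nonneg fun _ _ => sq_nonneg _
  have hcol : ∀ j, ∑ r, A r j ^ 2 = 1 := by
    intro j
    have := aux_sq (fun r => A r j)
    rw [hcols j] at this
    simpa using this.symm
  have hqe : q = 2 * (1 - ∑ r, A r i * A r j) := by
    have : q = ∑ r, A r i ^ 2 + ∑ r, A r j ^ 2 - 2 * ∑ r, A r i * A r j := by
      rw [hq, Finset.mul_sum, ← Finset.sum_add_distrib, ← Finset.sum_sub_distrib]
      exact Finset.sum_congr rfl fun _ _ => by ring
    rw [this, hcol, hcol]; ring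
  have hloss : ∀ t, l2 (y - A.mulVec (pert xh i j t)) ^ 2 = l2 R ^ 2 - 2 * t * c + t ^ 2 * q := by
    intro t
    rw [aux_sq, aux_sq, hc, hq, Finset.mul_sum, Finset.mul_sum, ← Finset.sum_sub_distrib,
      ← Finset.sum_add_distrib]
    refine Finset.sum_congr rfl fun r _ => ?_
    rw [Pi.sub_apply, aux_mulVec, hR, Pi.sub_apply]
    ring
  have hnorm : ∀ t, |t| ≤ min |xh i| |xh j| →
      sglNorm G μ (pert xh i j t) ≤ sglNorm G μ xh + μ * ((t * (xh i - xh j) + t ^ 2) / N) := by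
    intro t ht
    have h1 := aux_l1 xh i j hij (G s) hi hj t
      (aux_abs _ _ _ hprod (ht.trans (min_le_left _ _)) (ht.trans (min_le_right _ _)))
    have h2 := aux_l2 xh i j hij (G s) hi hj t
    have h3 : l2 (proj (G s) (pert xh i j t)) ≤ N + (t * (xh i - xh j) + t ^ 2) / N := by
      have : l2 (proj (G s) (pert xh i j t)) - N ≤ (t * (xh i - xh j) + t ^ 2) / N := by
        rw [le_div_iff₀ hNpos]
        nlinarith [sq_nonneg (l2 (proj (G s) (pert xh i j t)) - N)]
      linarith
    unfold sglNorm
    rw [← Finset.add_sum_erase _ _ (Finset.mem_univ s), ← Finset.add_sum_erase _ (fun i =>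
      (1 - μ) * l1 (proj (G i) xh) + μ * l2 (proj (G i) xh)) (Finset.mem_univ s)]
    have h4 : ∀ k ∈ Finset.univ.erase s, (1 - μ) * l1 (proj (G k) (pert xh i j t)) +
        μ * l2 (proj (G k) (pert xh i j t)) =
        (1 - μ) * l1 (proj (G k) xh) + μ * l2 (proj (G k) xh) := by
      intro k hk
      have hd := hG.2.1 s k (Finset.ne_of_mem_erase hk).symm
      rw [aux_other _ _ _ _ (Finset.disjoint_left.mp hd hi) (Finset.disjoint_left.mp hd hj)]
    rw [Finset.sum_congr rfl h4, h1]
    have := mul_le_mul_of_nonneg_left h3 hμ0.le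
    simp only [← hN]
    linarith
  have hkey : μ * (xh i - xh j) / N - 2 * lam * c = 0 := by
    refine aux_quad _ (lam * q + μ / N) (min |xh i| |xh j|) (by positivity)
      (lt_min (abs_pos.mpr hxi) (abs_pos.mpr hxj)) ?_
    intro t ht
    have h1 := hmin (pert xh i j t)
    have h2 := hnorm t ht
    rw [hloss] at h1
    have h3 : (μ * (xh i - xh j) / N - 2 * lam * c) * t + (lam * q + μ / N) * t ^ 2 =
      lam * (l2 R ^ 2 - 2 * t * c + t ^ 2 * q) - lam * l2 R ^ 2 +
        μ * ((t * (xh i - xh j) + t ^ 2) / N) := by ring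
    rw [h3]; linarith
  have hRy : l2 R ≤ l2 y := by
    have h0 := hmin 0
    have hz : sglNorm G μ 0 = 0 := by simp [sglNorm, l1, l2, proj]
    have hp : 0 ≤ sglNorm G μ xh := by
      refine Finset.sum_nonneg fun k _ => add_nonneg (mul_nonneg (by linarith)
        (Finset.sum_nonneg fun _ _ => abs_nonneg _)) (mul_nonneg hμ0.le (aux_nonneg _))
    rw [hz, Matrix.mulVec_zero, sub_zero] at h0
    have : l2 R ^ 2 ≤ l2 y ^ 2 := le_of_mul_le_mul_left (by linarith) hlam
    exact le_of_sq_le_sq this (aux_nonneg _)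
  have hcb : |c| ≤ l2 y * Real.sqrt q := by
    have h1 : c ^ 2 ≤ l2 R ^ 2 * q := by
      rw [aux_sq]; exact Finset.sum_mul_sq_le_sq_mul_sq _ _ _
    have h2 : |c| ≤ l2 R * Real.sqrt q := by
      apply abs_le_of_sq_le_sq _ (mul_nonneg (aux_nonneg _) (Real.sqrt_nonneg _))
      rw [mul_pow, Real.sq_sqrt hq0]; exact h1
    exact h2.trans (mul_le_mul_of_nonneg_right hRy (Real.sqrt_nonneg _))
  have hD : xh i - xh j = 2 * lam / μ * N * c := by
    field_simp at hkey ⊢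
    linarith
  rw [← hqe, hD, abs_mul, abs_of_pos (by positivity : 0 < 2 * lam / μ * N)]
  calc 2 * lam / μ * N * |c| ≤ 2 * lam / μ * N * (l2 y * Real.sqrt q) :=
        mul_le_mul_of_nonneg_left hcb (by positivity)
    _ = _ := by ring
end

section
/- Let y ∈ ℝᵐ and A ∈ ℝ^{m×n}, where each column a_j of A satisfies ‖a_j‖₂ = 1. Let μ ∈ (0,1] and λ > 0, and let x̂ be a minimizer over z ∈ ℝⁿ of λ‖y − Az‖₂² + (1−μ)‖z‖₁ + μ‖z‖₂. Suppose indices i and j satisfy x̂_i·x̂_j > 0. Then |x̂_i − x̂_j| ≤ (2λ/μ)·√(2(1 − a_iᵀa_j))·‖y‖₂·‖x̂‖₂. -/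
theorem l2_sq_aux {n : ℕ} (x : Fin n → ℝ) : l2 x ^ 2 = ∑ i, (x i) ^ 2 :=
  Real.sq_sqrt (Finset.sum_nonneg fun _ _ => sq_nonneg _)

theorem sum_sq_aux {n : ℕ} (x v : Fin n → ℝ) (t : ℝ) :
    ∑ k, (x k + t * v k) ^ 2 =
      ∑ k, x k ^ 2 + 2 * t * ∑ k, x k * v k + t ^ 2 * ∑ k, v k ^ 2 := by
  rw [Finset.mul_sum, Finset.mul_sum, ← Finset.sum_add_distrib, ← Finset.sum_add_distrib]
  exact Finset.sum_congr rfl fun k _ => by ring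

theorem l1_aux {n : ℕ} (x : Fin n → ℝ) (i j : Fin n) (hij : i ≠ j) (hprod : 0 < x i * x j)
    (t : ℝ) (h1 : |t| < |x i|) (h2 : |t| < |x j|) :
    l1 (fun k => x k + t * ((Pi.single i 1 - Pi.single j 1 : Fin n → ℝ) k)) = l1 x := by
  obtain ⟨s, hs⟩ : ∃ s : ℝ, ∀ k,
      |x k + t * ((Pi.single i 1 - Pi.single j 1 : Fin n → ℝ) k)| =
        |x k| + s * t * ((Pi.single i 1 - Pi.single j 1 : Fin n → ℝ) k) := by
    rcases pos_and_pos_or_neg_and_neg_of_mul_pos hprod with ⟨hi, hj⟩ | ⟨hi, hj⟩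
    · rw [abs_of_pos hi] at h1
      rw [abs_of_pos hj] at h2
      rw [abs_lt] at h1 h2
      refine ⟨1, fun k => ?_⟩
      by_cases hki : k = i
      · subst hki
        simp [hij]
        rw [abs_of_pos hi, abs_of_pos (by linarith)]
      · by_cases hkj : k = j
        · subst hkj
          simp [hki]
          rw [abs_of_pos hj, abs_of_pos (by linarith)]
        · simp [hki, hkj]
    · rw [abs_of_neg hi] at h1
      rw [abs_of_neg hj] at h2
      rw [abs_lt] at h1 h2
      refine ⟨-1, fun k => ?_⟩
      by_cases hki : k = i
      · subst hki
        simp [hij]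
        rw [abs_of_neg hi, abs_of_neg (by linarith)]; ring
      · by_cases hkj : k = j
        · subst hkj
          simp [hki]
          rw [abs_of_neg hj, abs_of_neg (by linarith)]; ring
        · simp [hki, hkj]
  unfold l1
  rw [Finset.sum_congr rfl fun k _ => hs k, Finset.sum_add_distrib, ← Finset.mul_sum]
  simp

/-- Grouping effect for the CLOT formulation. -/
theorem stmt4 (m n : ℕ) (y : Fin m → ℝ) (A : Matrix (Fin m) (Fin n) ℝ)
    (hcols : ∀ j : Fin n, l2 (fun i => A i j) = 1)
    (μ : ℝ) (hμ : μ ∈ Set.Ioc (0 : ℝ) 1)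
    (lam : ℝ) (hlam : 0 < lam)
    (xh : Fin n → ℝ)
    (hmin : ∀ z : Fin n → ℝ,
      lam * (l2 (y - A.mulVec xh)) ^ 2 + ((1 - μ) * l1 xh + μ * l2 xh) ≤
        lam * (l2 (y - A.mulVec z)) ^ 2 + ((1 - μ) * l1 z + μ * l2 z))
    (i j : Fin n) (hprod : 0 < xh i * xh j) :
    |xh i - xh j| ≤ (2 * lam / μ) * Real.sqrt (2 * (1 - ∑ r, A r i * A r j)) *
      l2 y * l2 xh := by
  obtain ⟨hμ0, hμ1⟩ := hμ
  have hnn : ∀ {p : ℕ} (x : Fin p → ℝ), 0 ≤ l2 x := fun x => Real.sqrt_nonneg _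
  by_cases hij : i = j
  · subst hij
    simp only [sub_self, abs_zero]
    have := hnn y
    have := hnn xh
    positivity
  have hi0 : xh i ≠ 0 := fun h => by simp [h] at hprod
  have hj0 : xh j ≠ 0 := fun h => by simp [h] at hprod
  set v : Fin n → ℝ := Pi.single i 1 - Pi.single j 1 with hv
  set r : Fin m → ℝ := y - A.mulVec xh with hr
  set w : Fin m → ℝ := fun k => A k j - A k i with hw
  have hX : 0 < ∑ k, xh k ^ 2 :=
    Finset.sum_pos' (fun _ _ => sq_nonneg _) ⟨i, Finset.mem_univ _, by positivity⟩
  have hxpos : 0 < l2 xh := Real.sqrt_pos.2 hX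
  have hxv : ∑ k, xh k * v k = xh i - xh j := by
    simp [hv, mul_sub, Finset.sum_sub_distrib, Pi.single_apply]
  have hAv : ∀ t : ℝ, y - A.mulVec (fun k => xh k + t * v k) = fun k => r k + t * w k := by
    intro t
    have e : (fun k => xh k + t * v k) = xh + t • v := by ext k; simp
    rw [e, Matrix.mulVec_add, Matrix.mulVec_smul, hv, Matrix.mulVec_sub]
    ext k
    simp [hr, hw]
    ring
  -- local minimality
  set g : ℝ → ℝ := fun t =>
    lam * (∑ k, r k ^ 2 + 2 * t * ∑ k, r k * w k + t ^ 2 * ∑ k, w k ^ 2) +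
      μ * Real.sqrt (∑ k, xh k ^ 2 + 2 * t * (xh i - xh j) + t ^ 2 * ∑ k, v k ^ 2) with hg
  have hloc : IsLocalMin g 0 := by
    have hpos : 0 < min |xh i| |xh j| := lt_min (abs_pos.2 hi0) (abs_pos.2 hj0)
    filter_upwards [Metric.ball_mem_nhds (0 : ℝ) hpos] with t ht
    rw [Metric.mem_ball, Real.dist_eq, sub_zero, lt_min_iff] at ht
    have h := hmin (fun k => xh k + t * v k)
    rw [l1_aux xh i j hij hprod t ht.1 ht.2, hAv t, l2_sq_aux, l2_sq_aux, sum_sq_aux] at h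
    unfold l2 at h
    rw [sum_sq_aux, hxv] at h
    simp only [hg]
    simp only [mul_zero, zero_mul, add_zero, ne_eq, OfNat.ofNat_ne_zero, not_false_eq_true,
      zero_pow]
    linarith
  have hq : ∀ a b c : ℝ, HasDerivAt (fun t : ℝ => a + 2 * t * b + t ^ 2 * c) (2 * b) 0 := by
    intro a b c
    have h1 := ((((hasDerivAt_id (0 : ℝ)).const_mul 2).mul_const b).const_add a).add
      (((hasDerivAt_id (0 : ℝ)).pow 2).mul_const c)
    exact h1.congr_deriv (by simp)
  have hder : HasDerivAt g (lam * (2 * ∑ k, r k * w k) +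
      μ * ((2 * (xh i - xh j)) / (2 * l2 xh))) 0 := by
    have h1 := (hq (∑ k, r k ^ 2) (∑ k, r k * w k) (∑ k, w k ^ 2)).const_mul lam
    have h2 := ((hq (∑ k, xh k ^ 2) (xh i - xh j) (∑ k, v k ^ 2)).sqrt
      (by simpa using hX.ne')).const_mul μ
    have h3 := h1.add h2
    exact h3.congr_deriv (by simp [l2])
  have h0 := hloc.hasDerivAt_eq_zero hder
  have hkey : xh i - xh j = (2 * lam / μ) * (-(∑ k, r k * w k)) * l2 xh := by
    field_simp at h0 ⊢
    linarith
  have hry : l2 r ≤ l2 y := by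
    have h := hmin 0
    have e1 : l1 (0 : Fin n → ℝ) = 0 := by simp [l1]
    have e2 : l2 (0 : Fin n → ℝ) = 0 := by simp [l2]
    rw [e1, e2, Matrix.mulVec_zero, sub_zero] at h
    have hl1 : 0 ≤ l1 xh := Finset.sum_nonneg fun _ _ => abs_nonneg _
    have h3 : 0 ≤ (1 - μ) * l1 xh := mul_nonneg (by linarith) hl1
    have h4 : 0 ≤ μ * l2 xh := by positivity
    have h5 : lam * l2 r ^ 2 ≤ lam * l2 y ^ 2 := by linarith
    exact (sq_le_sq₀ (hnn r) (hnn y)).1 (le_of_mul_le_mul_left h5 hlam)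
  have hw2 : l2 w = Real.sqrt (2 * (1 - ∑ r, A r i * A r j)) := by
    have hc : ∀ p, ∑ k, A k p ^ 2 = 1 := fun p => by
      rw [← l2_sq_aux (fun k => A k p), hcols p]; norm_num
    have e : ∑ k, w k ^ 2 = 2 * (1 - ∑ r, A r i * A r j) := by
      have : ∀ k, w k ^ 2 = A k j ^ 2 + A k i ^ 2 - 2 * (A k i * A k j) := fun k => by
        simp only [hw]; ring
      rw [Finset.sum_congr rfl fun k _ => this k, Finset.sum_sub_distrib,
        Finset.sum_add_distrib, ← Finset.mul_sum, hc, hc]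
      ring
    rw [l2, e]
  have hcs : |∑ k, r k * w k| ≤ l2 w * l2 y := by
    have h1 : |∑ k, r k * w k| ≤ l2 r * l2 w := by
      refine abs_le_of_sq_le_sq ?_ (mul_nonneg (hnn r) (hnn w))
      rw [mul_pow, l2_sq_aux, l2_sq_aux]
      exact Finset.sum_mul_sq_le_sq_mul_sq _ _ _
    nlinarith [hnn w]
  rw [hkey, abs_mul, abs_mul, abs_neg, abs_of_pos (show 0 < 2 * lam / μ by positivity),
    abs_of_pos hxpos, ← hw2]
  rw [mul_assoc (2 * lam / μ) (l2 w)]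
  gcongr
end

section
/- Let 𝒢 = {G₁,…,G_g} be a partition of {1,…,n} into g disjoint nonempty subsets, let μ ∈ (0,1), and set γ := μ√g/(1−μ). Let x, x̂ ∈ ℝⁿ satisfy ‖x̂‖_{SGL,μ} ≤ ‖x‖_{SGL,μ}, set h := x̂ − x, and let S be an index set of k largest-magnitude components of x (so that ‖x_{Sᶜ}‖₁ = σ_k(x, ‖·‖₁)). Then (1−γ)‖h_{Sᶜ}‖₁ − (1+γ)‖h_S‖₁ ≤ 2σ_k(x, ‖·‖₁). -/
lemma l2_eq_norm {n : ℕ} (z : Fin n → ℝ) : l2 z = ‖(WithLp.toLp 2 z : EuclideanSpace ℝ (Fin n))‖ := by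
  rw [EuclideanSpace.norm_eq]
  simp [l2]

lemma l2_le_add {n : ℕ} (T : Finset (Fin n)) (x xh : Fin n → ℝ) :
    l2 (proj T x) ≤ l2 (proj T xh) + l2 (proj T (xh - x)) := by
  have e : proj T x = proj T xh - proj T (xh - x) := by
    funext i
    simp only [proj, Pi.sub_apply]
    split_ifs <;> ring
  rw [e, l2_eq_norm, l2_eq_norm, l2_eq_norm, WithLp.toLp_sub]
  exact norm_sub_le _ _

lemma l2_le_l1 {n : ℕ} (z : Fin n → ℝ) : l2 z ≤ l1 z := by
  have h0 : 0 ≤ l1 z := Finset.sum_nonneg fun i _ => abs_nonneg _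
  apply Real.sqrt_le_iff.2 ⟨h0, ?_⟩
  calc ∑ i, (z i) ^ 2 ≤ ∑ i, |z i| * l1 z := by
        refine Finset.sum_le_sum fun i _ => ?_
        rw [← sq_abs, sq]
        refine mul_le_mul_of_nonneg_left ?_ (abs_nonneg _)
        exact Finset.single_le_sum (f := fun j => |z j|) (fun j _ => abs_nonneg _) (Finset.mem_univ i)
    _ = l1 z ^ 2 := by rw [← Finset.sum_mul, sq]; rfl

lemma sum_l1_proj {n g : ℕ} (G : Fin g → Finset (Fin n)) (hG : IsPartition G) (z : Fin n → ℝ) :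
    ∑ i, l1 (proj (G i) z) = l1 z := by
  unfold l1
  rw [Finset.sum_comm]
  refine Finset.sum_congr rfl fun j _ => ?_
  obtain ⟨i, hi⟩ := hG.2.2 j
  rw [Finset.sum_eq_single i]
  · simp [proj, hi]
  · intro b _ hb
    have : j ∉ G b := fun hj => (Finset.disjoint_left.1 (hG.2.1 b i hb)) hj hi
    simp [proj, this]
  · simp

/-- Cone condition derived from SGL-norm minimality. -/
theorem stmt12 (n g k : ℕ) (G : Fin g → Finset (Fin n)) (hG : IsPartition G)
    (μ : ℝ) (hμ : μ ∈ Set.Ioo (0 : ℝ) 1)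
    (γ : ℝ) (hγ : γ = μ * Real.sqrt g / (1 - μ))
    (x xh : Fin n → ℝ) (hle : sglNorm G μ xh ≤ sglNorm G μ x)
    (h : Fin n → ℝ) (hh : h = xh - x)
    (S : Finset (Fin n)) (hScard : S.card ≤ k)
    (hS : l1 (proj Sᶜ x) = sigma1 k x) :
    (1 - γ) * l1 (proj Sᶜ h) - (1 + γ) * l1 (proj S h) ≤ 2 * sigma1 k x := by
  obtain ⟨h0, h1⟩ := hμ
  rw [← hS]
  have hpos : 0 < 1 - μ := by linarith
  have key1 : l1 (proj Sᶜ h) - l1 (proj S h) - 2 * l1 (proj Sᶜ x) ≤ l1 xh - l1 x := by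
    unfold l1
    rw [Finset.mul_sum, ← Finset.sum_sub_distrib, ← Finset.sum_sub_distrib,
      ← Finset.sum_sub_distrib]
    refine Finset.sum_le_sum fun i _ => ?_
    subst hh
    by_cases hi : i ∈ S
    · simp only [proj, hi, Finset.mem_compl, not_true, if_true, if_false, Pi.sub_apply, abs_zero]
      have := abs_sub_abs_le_abs_sub (x i) (xh i)
      rw [abs_sub_comm] at this
      linarith
    · simp only [proj, hi, Finset.mem_compl, not_false_iff, if_true, if_false, Pi.sub_apply, abs_zero]
      have := abs_sub (xh i) (x i)
      linarith
  have key2 : l1 h = l1 (proj S h) + l1 (proj Sᶜ h) := by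
    unfold l1
    rw [← Finset.sum_add_distrib]
    refine Finset.sum_congr rfl fun i _ => ?_
    by_cases hi : i ∈ S <;> simp [proj, hi]
  have key3 : ∑ i, l2 (proj (G i) x) ≤ ∑ i, l2 (proj (G i) xh) + l1 h := by
    rw [← sum_l1_proj G hG h, ← Finset.sum_add_distrib]
    refine Finset.sum_le_sum fun i _ => ?_
    have := l2_le_add (G i) x xh
    rw [← hh] at this
    linarith [l2_le_l1 (proj (G i) h)]
  have hn : 0 ≤ l1 h := Finset.sum_nonneg fun i _ => abs_nonneg _
  have key4 : l1 h ≤ Real.sqrt g * l1 h := by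
    rcases Nat.eq_zero_or_pos g with hg | hg
    · subst hg
      rw [← sum_l1_proj G hG h]
      simp
    · have : 1 ≤ Real.sqrt g := Real.one_le_sqrt.2 (by exact_mod_cast hg)
      nlinarith
  have key5 : (1 - μ) * (l1 xh - l1 x) ≤ μ * l1 h := by
    unfold sglNorm at hle
    simp only [Finset.sum_add_distrib, ← Finset.mul_sum, sum_l1_proj G hG] at hle
    nlinarith
  have key6 : l1 xh - l1 x ≤ γ * l1 h := by
    rw [hγ, div_mul_eq_mul_div, le_div_iff₀ hpos]
    nlinarith
  rw [key2] at key6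
  linarith
end
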